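/- Let β₁, β₂ ≥ 0 with β₁ + β₂ < 1, and let μ be a Borel probability measure on ℝ that is invariant under the reflection x ↦ −x (for instance a centered Gaussian measure). If m : ℝ → [−1,1] is a bounded measurable function satisfying m(x) = tanh(β₁(x + m(x)) + β₂·∫ m dμ) for every x ∈ ℝ, then ∫ m dμ = 0 and m(x) = tanh(β₁(x + m(x))) for every x ∈ ℝ. -/

import Mathlib

open MeasureTheory

theorem aux_tanh_lip (a b : ℝ) : |Real.tanh a - Real.tanh b| ≤ |a - b| := by
  have hd : ∀ x ∈ (Set.univ : Set ℝ),
      HasDerivWithinAt Real.tanh (1 / Real.cosh x ^ 2) Set.univ x := by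
    intro x _
    have h := (Real.hasDerivAt_sinh x).div (Real.hasDerivAt_cosh x) (Real.cosh_pos x).ne'
    have e : Real.tanh = Real.sinh / Real.cosh := by
      funext y
      simp [Real.tanh_eq_sinh_div_cosh]
    rw [e]
    have e2 : (1 : ℝ) = Real.cosh x * Real.cosh x - Real.sinh x * Real.sinh x := by
      nlinarith [Real.cosh_sq_sub_sinh_sq x]
    rw [e2]
    exact h.hasDerivWithinAt
  have hb : ∀ x ∈ (Set.univ : Set ℝ), ‖1 / Real.cosh x ^ 2‖ ≤ (1 : ℝ) := by
    intro x _
    have := Real.one_le_cosh x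
    rw [Real.norm_of_nonneg (by positivity)]
    rw [div_le_one (by positivity)]
    nlinarith
  have := Convex.norm_image_sub_le_of_norm_hasDerivWithin_le hd hb convex_univ
    (Set.mem_univ b) (Set.mem_univ a)
  simpa using this

/-- Triviality of the order-N limit dynamics under a symmetric environment: if μ is a
reflection-invariant probability measure, β₁ + β₂ < 1, and m : ℝ → [−1,1] is bounded
measurable with m(x) = tanh(β₁(x + m(x)) + β₂∫m dμ) for all x, then ∫m dμ = 0 and
m(x) = tanh(β₁(x + m(x))) for all x. -/
theorem order_N_fixed_point_symmetric (β₁ β₂ : ℝ) (h₁ : 0 ≤ β₁) (h₂ : 0 ≤ β₂)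
    (hsub : β₁ + β₂ < 1) (μ : Measure ℝ) [IsProbabilityMeasure μ]
    (hsym : μ.map (fun x => -x) = μ)
    (m : ℝ → ℝ) (hmeas : Measurable m) (hb : ∀ x, m x ∈ Set.Icc (-1 : ℝ) 1)
    (hfix : ∀ x, m x = Real.tanh (β₁ * (x + m x) + β₂ * ∫ y, m y ∂μ)) :
    (∫ y, m y ∂μ = 0) ∧ ∀ x, m x = Real.tanh (β₁ * (x + m x)) := by
  have hM : ∫ y, m y ∂μ = 0 := by
    set M := ∫ y, m y ∂μ with hMdef
    have hi : Integrable m μ := by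
      refine Integrable.of_bound hmeas.aestronglyMeasurable 1 (Filter.Eventually.of_forall ?_)
      intro x
      exact abs_le.mpr (hb x)
    have hi' : Integrable (fun x => m (-x)) μ := by
      refine Integrable.of_bound (hmeas.comp measurable_neg).aestronglyMeasurable 1
        (Filter.Eventually.of_forall ?_)
      intro x
      exact abs_le.mpr (hb (-x))
    have hneg : ∫ y, m (-y) ∂μ = M := by
      have h := integral_map (μ := μ) (φ := fun x : ℝ => -x) measurable_neg.aemeasurable
        (f := m) hmeas.aestronglyMeasurable
      rw [hsym] at h
      exact h.symm
    have hs : ∀ x, ‖m x + m (-x)‖ ≤ 2 * β₂ * |M| / (1 - β₁) := by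
      intro x
      rw [Real.norm_eq_abs, le_div_iff₀ (by linarith)]
      have h1 := aux_tanh_lip (β₁ * (x + m x) + β₂ * M) (-(β₁ * (-x + m (-x)) + β₂ * M))
      rw [Real.tanh_neg, ← hfix x, ← hfix (-x)] at h1
      have e : β₁ * (x + m x) + β₂ * M - -(β₁ * (-x + m (-x)) + β₂ * M)
          = β₁ * (m x + m (-x)) + 2 * β₂ * M := by ring
      rw [e, sub_neg_eq_add] at h1
      have h3 := abs_add_le (β₁ * (m x + m (-x))) (2 * β₂ * M)
      rw [abs_mul, abs_mul (2 * β₂), abs_of_nonneg h₁,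
        abs_of_nonneg (by positivity : 0 ≤ 2 * β₂)] at h3
      linarith
    have h4 := norm_integral_le_of_norm_le_const (μ := μ) (Filter.Eventually.of_forall hs)
    rw [integral_add hi hi', hneg, ← hMdef] at h4
    simp only [probReal_univ, mul_one] at h4
    rw [Real.norm_eq_abs, le_div_iff₀ (by linarith), ← two_mul, abs_mul, abs_two] at h4
    by_contra hne
    have := abs_pos.mpr hne
    nlinarith
  refine ⟨hM, fun x => ?_⟩
  have h := hfix x
  rw [hM, mul_zero, add_zero] at h
  exact h
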